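/- Let h : [0, 1/π] → [0, 1] be the inverse function of g. There exist constants 0 < c < C such that for every y ∈ (0, 1/π] and every j ∈ {1, 2, 3}, c · y^{2/3 − j} ≤ | h^{(j)}(y) | ≤ C · y^{2/3 − j}, where h^{(j)} denotes the j-th derivative of h. -/

import Mathlib

open Real Set

/-- The function `g(t) = (√(1-t²) - t arccos t)/π`. -/
noncomputable def gfun (t : ℝ) : ℝ := (Real.sqrt (1 - t ^ 2) - t * Real.arccos t) / π

/-!
In the angular coordinate `t = cos x`, the function `g` becomes `(sin x - x cos x) / π`, which is
smooth with derivative `x sin x / π` and comparable to `x ^ 3` on `[0, π / 2]`. Hence `h = cos ∘ θ`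
where `θ = arccos ∘ h` satisfies `θ' = π / (θ sin θ)`, and each differentiation of `F ∘ θ` applies
the operator `F ↦ π F' / (x sin x)` to `F`. Starting from `cos` this gives
`-π / x`, `π² / (x³ sin x)` and `-π³ (3 sin x + x cos x) / (x⁵ sin³ x)`, which are comparable to
`x⁻¹`, `x⁻⁴` and `x⁻⁷`. Since `y` is comparable to `θ(y)³`, these are the powers `y ^ (2/3 - j)`.
-/

open Filter Asymptotics Topology

section General

theorem continuousOn_of_leftInvOn_of_isCompact {X Y : Type*} [TopologicalSpace X]
    [TopologicalSpace Y] [T2Space Y] {f : X → Y} {h : Y → X} {K : Set X} {s : Set Y}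
    (hK : IsCompact K) (hf : ContinuousOn f K) (hmaps : MapsTo h s K)
    (hleft : LeftInvOn h f K) (hright : RightInvOn h f s) : ContinuousOn h s := by
  refine continuousOn_iff_isClosed.2 fun C hC => ⟨f '' (K ∩ C), ?_, ?_⟩
  · exact ((hK.inter_right hC).image_of_continuousOn (hf.mono inter_subset_left)).isClosed
  · ext y
    constructor
    · rintro ⟨hyC, hys⟩
      exact ⟨⟨h y, ⟨hmaps hys, hyC⟩, hright hys⟩, hys⟩
    · rintro ⟨⟨x, ⟨hxK, hxC⟩, rfl⟩, hys⟩
      exact ⟨by rwa [mem_preimage, hleft hxK], hys⟩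

theorem hasDerivWithinAt_of_rightInvOn {𝕜 : Type*} [NontriviallyNormedField 𝕜] {f θ : 𝕜 → 𝕜}
    {f' y : 𝕜} {s : Set 𝕜} (hθ : ContinuousWithinAt θ s y) (hf : HasDerivAt f f' (θ y))
    (hf' : f' ≠ 0) (hinv : RightInvOn θ f s) (hy : y ∈ s) : HasDerivWithinAt θ f'⁻¹ s y := by
  have hf_univ := (hf.hasFDerivAt_equiv hf').hasFDerivWithinAt (s := univ)
  refine HasFDerivWithinAt.of_local_left_inverse ?_ hf_univ hy ?_
  · rwa [nhdsWithin_univ]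
  · exact eventually_mem_nhdsWithin.mono fun z hz => hinv hz

theorem iteratedDerivWithin_congr_set {𝕜 E : Type*} [NontriviallyNormedField 𝕜]
    [NormedAddCommGroup E] [NormedSpace 𝕜 E] {s t : Set 𝕜} {x : 𝕜} (hst : s =ᶠ[𝓝 x] t) (n : ℕ)
    (f : 𝕜 → E) : iteratedDerivWithin n f s x = iteratedDerivWithin n f t x := by
  rw [iteratedDerivWithin, iteratedDerivWithin, iteratedFDerivWithin_congr_set hst]

theorem Icc_eventuallyEq_Ioc {α : Type*} [LinearOrder α] [TopologicalSpace α] [ClosedIicTopology α]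
    {a b x : α} (hx : a < x) : Icc a b =ᶠ[𝓝 x] Ioc a b := by
  filter_upwards [Ioi_mem_nhds hx] with z hz
  exact propext ⟨fun h => ⟨hz, h.2⟩, fun h => ⟨hz.le, h.2⟩⟩

theorem isTheta_principal_of_mul_le_of_le_mul {α : Type*} {s : Set α} {f g : α → ℝ} {c C : ℝ}
    (hc : 0 < c) (hg : ∀ x ∈ s, 0 ≤ g x) (hlower : ∀ x ∈ s, c * g x ≤ f x)
    (hupper : ∀ x ∈ s, f x ≤ C * g x) : f =Θ[𝓟 s] g := by
  have hf : ∀ x ∈ s, 0 ≤ f x := fun x hx => (mul_nonneg hc.le (hg x hx)).trans (hlower x hx)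
  constructor
  · refine isBigO_principal.2 ⟨C, fun x hx => ?_⟩
    rw [norm_of_nonneg (hf x hx), norm_of_nonneg (hg x hx)]
    exact hupper x hx
  · refine isBigO_principal.2 ⟨c⁻¹, fun x hx => ?_⟩
    rw [norm_of_nonneg (hf x hx), norm_of_nonneg (hg x hx), le_inv_mul_iff₀ hc]
    exact hlower x hx

theorem exists_forall_bounds_of_isTheta_principal {ι α E F : Type*} [SeminormedAddCommGroup E]
    [SeminormedAddCommGroup F] {J : Finset ι} {s : Set α} {f : ι → α → E} {g : ι → α → F}
    (hfg : ∀ j ∈ J, f j =Θ[𝓟 s] g j) :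
    ∃ c C : ℝ, 0 < c ∧ c < C ∧ ∀ j ∈ J, ∀ x ∈ s,
      c * ‖g j x‖ ≤ ‖f j x‖ ∧ ‖f j x‖ ≤ C * ‖g j x‖ := by
  have hupper := (eventually_all_finset J).2 fun j hj =>
    isBigO_iff_eventually_isBigOWith.1 (hfg j hj).isBigO
  have hlower := (eventually_all_finset J).2 fun j hj =>
    isBigO_iff_eventually_isBigOWith.1 (hfg j hj).symm.isBigO
  obtain ⟨C, hC_upper, hC_lower, hC⟩ := (hupper.and (hlower.and (eventually_gt_atTop 1))).exists
  have hC_pos : 0 < C := zero_lt_one.trans hC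
  refine ⟨C⁻¹, C, inv_pos.2 hC_pos, (inv_lt_one_of_one_lt₀ hC).trans hC, fun j hj x hx => ⟨?_, ?_⟩⟩
  · exact (inv_mul_le_iff₀ hC_pos).2 (isBigOWith_principal.1 (hC_lower j hj) x hx)
  · exact isBigOWith_principal.1 (hC_upper j hj) x hx

end General

/-- The function `g` in the angular coordinate: `gfunCos x = g (cos x)` for `x ∈ [0, π]`. It is
smooth on all of `ℝ`, whereas `g` is singular at `t = 1`. -/
noncomputable def gfunCos (x : ℝ) : ℝ := (sin x - x * cos x) / π

theorem gfun_eq_gfunCos_arccos {t : ℝ} (ht : t ∈ Icc (-1) 1) : gfun t = gfunCos (arccos t) := by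
  rw [gfun, gfunCos, sin_arccos, cos_arccos ht.1 ht.2, mul_comm t]

theorem continuous_gfun : Continuous gfun := by
  unfold gfun
  fun_prop

theorem hasDerivAt_sin_sub_mul_cos (x : ℝ) :
    HasDerivAt (fun x => sin x - x * cos x) (x * sin x) x :=
  ((hasDerivAt_sin x).sub ((hasDerivAt_id' x).mul (hasDerivAt_cos x))).congr_deriv (by ring)

theorem hasDerivAt_div_three_mul_pow_three (c x : ℝ) :
    HasDerivAt (fun x => c / 3 * x ^ 3) (x * (c * x)) x :=
  ((hasDerivAt_pow 3 x).const_mul (c / 3)).congr_deriv (by push_cast; ring)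

theorem sin_sub_mul_cos_le {x : ℝ} (hx : 0 ≤ x) : sin x - x * cos x ≤ 1 / 3 * x ^ 3 := by
  refine image_le_of_deriv_right_le_deriv_boundary (a := 0) (b := x) (by fun_prop)
    (fun z _ => (hasDerivAt_sin_sub_mul_cos z).hasDerivWithinAt) (by simp) (by fun_prop)
    (fun z _ => (hasDerivAt_div_three_mul_pow_three 1 z).hasDerivWithinAt) (fun z hz => ?_)
    (right_mem_Icc.2 hx)
  exact mul_le_mul_of_nonneg_left (by linarith [sin_le hz.1]) hz.1

theorem le_sin_sub_mul_cos {x : ℝ} (hx : x ∈ Icc 0 (π / 2)) :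
    2 / π / 3 * x ^ 3 ≤ sin x - x * cos x := by
  refine image_le_of_deriv_right_le_deriv_boundary (a := 0) (b := π / 2) (by fun_prop)
    (fun z _ => (hasDerivAt_div_three_mul_pow_three (2 / π) z).hasDerivWithinAt) (by simp)
    (by fun_prop) (fun z _ => (hasDerivAt_sin_sub_mul_cos z).hasDerivWithinAt) (fun z hz => ?_) hx
  exact mul_le_mul_of_nonneg_left (mul_le_sin hz.1 hz.2.le) hz.1

section Asymptotics

theorem sin_isTheta_id : sin =Θ[𝓟 (Icc 0 (π / 2))] fun x => x :=
  isTheta_principal_of_mul_le_of_le_mul (c := 2 / π) (C := 1) (by positivity) (fun _ hx => hx.1)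
    (fun _ hx => mul_le_sin hx.1 hx.2) (fun _ hx => by simpa using sin_le hx.1)

theorem three_mul_sin_add_mul_cos_isTheta_id :
    (fun x => 3 * sin x + x * cos x) =Θ[𝓟 (Icc 0 (π / 2))] fun x => x := by
  refine isTheta_principal_of_mul_le_of_le_mul (c := 3 * (2 / π)) (C := 4) (by positivity)
    (fun _ hx => hx.1) (fun x hx => ?_) (fun x hx => ?_)
  · have hcos : 0 ≤ x * cos x :=
      mul_nonneg hx.1 (cos_nonneg_of_mem_Icc ⟨by linarith [hx.1, pi_pos], hx.2⟩)
    linarith [mul_le_sin hx.1 hx.2]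
  · linarith [sin_le hx.1, mul_le_of_le_one_right hx.1 (cos_le_one x)]

theorem gfunCos_isTheta_pow_three : gfunCos =Θ[𝓟 (Icc 0 (π / 2))] fun x => x ^ 3 := by
  have hnum : (fun x => sin x - x * cos x) =Θ[𝓟 (Icc 0 (π / 2))] fun x => x ^ 3 :=
    isTheta_principal_of_mul_le_of_le_mul (by positivity) (fun _ hx => pow_nonneg hx.1 3)
      (fun _ hx => le_sin_sub_mul_cos hx) (fun _ hx => sin_sub_mul_cos_le hx.1)
  have hscaled := (isTheta_const_mul_left (inv_ne_zero pi_ne_zero)).2 hnum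
  exact EventuallyEq.trans_isTheta (.of_forall fun x => div_eq_inv_mul _ _) hscaled

theorem gfunCos_nonneg {x : ℝ} (hx : x ∈ Icc 0 (π / 2)) : 0 ≤ gfunCos x := by
  have hcube : 0 ≤ 2 / π / 3 * x ^ 3 := mul_nonneg (by positivity) (pow_nonneg hx.1 3)
  exact div_nonneg (hcube.trans (le_sin_sub_mul_cos hx)) pi_pos.le

theorem gfunCos_rpow_isTheta {e : ℝ} {m : ℕ} (he : 3 * e = -m) :
    (fun x => gfunCos x ^ e) =Θ[𝓟 (Icc 0 (π / 2))] fun x => (x ^ m)⁻¹ := by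
  have hcube : ∀ x ∈ Icc 0 (π / 2), (x ^ 3) ^ e = (x ^ m)⁻¹ := fun x hx => by
    rw [← rpow_natCast x 3, ← rpow_mul hx.1, Nat.cast_ofNat, he, rpow_neg hx.1, rpow_natCast]
  exact (gfunCos_isTheta_pow_three.rpow (eventually_principal.2 fun _ => gfunCos_nonneg)
    (eventually_principal.2 fun _ hx => pow_nonneg hx.1 3)).trans_eventuallyEq
    (eventually_principal.2 hcube)

theorem neg_pi_div_isTheta (l : Filter ℝ) : (fun x => -π / x) =Θ[l] fun x => (x ^ 1)⁻¹ := by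
  simpa only [div_eq_mul_inv, pow_one] using
    (isTheta_const_mul_left (neg_ne_zero.2 pi_ne_zero)).2 (isTheta_refl (fun x : ℝ => x⁻¹) l)

theorem pi_sq_div_pow_three_mul_sin_isTheta :
    (fun x => π ^ 2 / (x ^ 3 * sin x)) =Θ[𝓟 (Icc 0 (π / 2))] fun x => (x ^ 4)⁻¹ := by
  have hden : (fun x => x ^ 3 * sin x) =Θ[𝓟 (Icc 0 (π / 2))] fun x => x ^ 4 :=
    ((isTheta_refl (fun x : ℝ => x ^ 3) _).mul sin_isTheta_id).trans_eventuallyEq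
      (.of_forall fun x => (pow_succ x 3).symm)
  simpa only [div_eq_mul_inv] using
    (isTheta_const_mul_left (pow_ne_zero 2 pi_ne_zero)).2 hden.inv

theorem neg_pi_pow_three_mul_div_isTheta :
    (fun x => -π ^ 3 * ((3 * sin x + x * cos x) / (x ^ 5 * sin x ^ 3)))
      =Θ[𝓟 (Icc 0 (π / 2))] fun x => (x ^ 7)⁻¹ := by
  have hquot : ∀ x : ℝ, x / (x ^ 5 * x ^ 3) = (x ^ 7)⁻¹ := fun x => by
    rcases eq_or_ne x 0 with rfl | hx
    · simp
    · field_simp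
  refine (isTheta_const_mul_left (neg_ne_zero.2 (pow_ne_zero 3 pi_ne_zero))).2 ?_
  exact (three_mul_sin_add_mul_cos_isTheta_id.div
    ((isTheta_refl (fun x : ℝ => x ^ 5) _).mul (sin_isTheta_id.pow 3))).trans_eventuallyEq
    (.of_forall hquot)

end Asymptotics

section Derivatives

variable {θ : ℝ → ℝ} {s : Set ℝ}

theorem hasDerivAt_gfunCos (x : ℝ) : HasDerivAt gfunCos (x * sin x / π) x :=
  (hasDerivAt_sin_sub_mul_cos x).div_const π

theorem iteratedDerivWithin_succ_eqOn_comp {f F G : ℝ → ℝ} {n : ℕ} (hs : UniqueDiffOn ℝ s)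
    (hcont : ContinuousOn θ s) (hmaps : MapsTo θ s (Ioo 0 π)) (hinv : RightInvOn θ gfunCos s)
    (hf : EqOn (iteratedDerivWithin n f s) (F ∘ θ) s)
    (hF : ∀ x ∈ Ioo 0 π, HasDerivAt F (G x * (x * sin x / π)) x) :
    EqOn (iteratedDerivWithin (n + 1) f s) (G ∘ θ) s := fun y hy => by
  have hne : θ y * sin (θ y) / π ≠ 0 :=
    (div_pos (mul_pos (hmaps hy).1 (sin_pos_of_mem_Ioo (hmaps hy))) pi_pos).ne'
  have hθ := hasDerivWithinAt_of_rightInvOn (hcont y hy) (hasDerivAt_gfunCos (θ y)) hne hinv hy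
  have hcomp : HasDerivWithinAt (F ∘ θ) (G (θ y)) s y :=
    ((hF _ (hmaps hy)).comp_hasDerivWithinAt y hθ).congr_deriv (mul_inv_cancel_right₀ hne _)
  rw [iteratedDerivWithin_succ, derivWithin_congr hf (hf hy), hcomp.derivWithin (hs y hy)]
  rfl

theorem iteratedDerivWithin_one_cos_comp (hs : UniqueDiffOn ℝ s) (hcont : ContinuousOn θ s)
    (hmaps : MapsTo θ s (Ioo 0 π)) (hinv : RightInvOn θ gfunCos s) :
    EqOn (iteratedDerivWithin 1 (cos ∘ θ) s) ((fun x => -π / x) ∘ θ) s := by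
  refine iteratedDerivWithin_succ_eqOn_comp hs hcont hmaps hinv (F := cos)
    (fun y _ => by rw [iteratedDerivWithin_zero]) fun x hx => ?_
  have hx_ne : x ≠ 0 := hx.1.ne'
  exact (hasDerivAt_cos x).congr_deriv (by field_simp)

theorem iteratedDerivWithin_two_cos_comp (hs : UniqueDiffOn ℝ s) (hcont : ContinuousOn θ s)
    (hmaps : MapsTo θ s (Ioo 0 π)) (hinv : RightInvOn θ gfunCos s) :
    EqOn (iteratedDerivWithin 2 (cos ∘ θ) s) ((fun x => π ^ 2 / (x ^ 3 * sin x)) ∘ θ) s := by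
  refine iteratedDerivWithin_succ_eqOn_comp hs hcont hmaps hinv
    (iteratedDerivWithin_one_cos_comp hs hcont hmaps hinv) fun x hx => ?_
  have hx_ne : x ≠ 0 := hx.1.ne'
  have hsin : sin x ≠ 0 := (sin_pos_of_mem_Ioo hx).ne'
  refine ((hasDerivAt_const x (-π)).fun_div (hasDerivAt_id' x) hx_ne).congr_deriv ?_
  field_simp
  ring

theorem iteratedDerivWithin_three_cos_comp (hs : UniqueDiffOn ℝ s) (hcont : ContinuousOn θ s)
    (hmaps : MapsTo θ s (Ioo 0 π)) (hinv : RightInvOn θ gfunCos s) :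
    EqOn (iteratedDerivWithin 3 (cos ∘ θ) s)
      ((fun x => -π ^ 3 * ((3 * sin x + x * cos x) / (x ^ 5 * sin x ^ 3))) ∘ θ) s := by
  refine iteratedDerivWithin_succ_eqOn_comp hs hcont hmaps hinv
    (iteratedDerivWithin_two_cos_comp hs hcont hmaps hinv) fun x hx => ?_
  have hx_ne : x ≠ 0 := hx.1.ne'
  have hsin : sin x ≠ 0 := (sin_pos_of_mem_Ioo hx).ne'
  refine ((hasDerivAt_const x (π ^ 2)).fun_div ((hasDerivAt_pow 3 x).fun_mul (hasDerivAt_sin x))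
    (mul_ne_zero (pow_ne_zero 3 hx_ne) hsin)).congr_deriv ?_
  push_cast
  field_simp
  ring

theorem comp_isTheta_rpow_of_rightInvOn {F : ℝ → ℝ} {e : ℝ} {m : ℕ}
    (hF : F =Θ[𝓟 (Icc 0 (π / 2))] fun x => (x ^ m)⁻¹) (he : 3 * e = -m)
    (hmaps : MapsTo θ s (Icc 0 (π / 2))) (hinv : RightInvOn θ gfunCos s) :
    (F ∘ θ) =Θ[𝓟 s] fun y => y ^ e := by
  have hF_gfunCos : F =Θ[𝓟 (Icc 0 (π / 2))] fun x => gfunCos x ^ e :=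
    hF.trans (gfunCos_rpow_isTheta he).symm
  have hθ : Tendsto θ (𝓟 s) (𝓟 (Icc 0 (π / 2))) := tendsto_principal_principal.2 hmaps
  have hcomp : (F ∘ θ) =Θ[𝓟 s] fun y => gfunCos (θ y) ^ e :=
    ⟨hF_gfunCos.isBigO.comp_tendsto hθ, hF_gfunCos.symm.isBigO.comp_tendsto hθ⟩
  exact hcomp.trans_eventuallyEq (eventually_principal.2 fun y hy => congrArg (· ^ e) (hinv hy))

theorem iteratedDerivWithin_cos_comp_isTheta (hs : UniqueDiffOn ℝ s) (hcont : ContinuousOn θ s)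
    (hmaps : MapsTo θ s (Ioc 0 (π / 2))) (hinv : RightInvOn θ gfunCos s) {j : ℕ}
    (hj : j = 1 ∨ j = 2 ∨ j = 3) :
    iteratedDerivWithin j (cos ∘ θ) s =Θ[𝓟 s] fun y => y ^ ((2 : ℝ) / 3 - j) := by
  have hIoo : MapsTo θ s (Ioo 0 π) :=
    hmaps.mono_right fun x hx => ⟨hx.1, hx.2.trans_lt (half_lt_self pi_pos)⟩
  have hIcc : MapsTo θ s (Icc 0 (π / 2)) := hmaps.mono_right Ioc_subset_Icc_self
  rcases hj with rfl | rfl | rfl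
  · exact (iteratedDerivWithin_one_cos_comp hs hcont hIoo hinv).eventuallyEq.trans_isTheta
      (comp_isTheta_rpow_of_rightInvOn (neg_pi_div_isTheta _) (by norm_num) hIcc hinv)
  · exact (iteratedDerivWithin_two_cos_comp hs hcont hIoo hinv).eventuallyEq.trans_isTheta
      (comp_isTheta_rpow_of_rightInvOn pi_sq_div_pow_three_mul_sin_isTheta (by norm_num) hIcc hinv)
  · exact (iteratedDerivWithin_three_cos_comp hs hcont hIoo hinv).eventuallyEq.trans_isTheta
      (comp_isTheta_rpow_of_rightInvOn neg_pi_pow_three_mul_div_isTheta (by norm_num) hIcc hinv)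

end Derivatives

section Inverse

variable {h : ℝ → ℝ} {s : Set ℝ}

theorem rightInvOn_arccos_comp (hmaps : MapsTo h s (Icc (-1) 1)) (hright : RightInvOn h gfun s) :
    RightInvOn (arccos ∘ h) gfunCos s := fun y hy => by
  rw [Function.comp_apply, ← gfun_eq_gfunCos_arccos (hmaps hy), hright hy]

theorem mapsTo_arccos_comp (hs : s ⊆ Ioi 0) (hmaps : MapsTo h s (Icc 0 1))
    (hright : RightInvOn h gfun s) : MapsTo (arccos ∘ h) s (Ioc 0 (π / 2)) := fun y hy => by
  have hne : h y ≠ 1 := fun h_one => by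
    have hgfun : gfun 1 = y := h_one ▸ hright hy
    exact (hs hy).ne (by simpa [gfun] using hgfun)
  exact ⟨arccos_pos.2 ((hmaps hy).2.lt_of_ne hne), arccos_le_pi_div_two.2 (hmaps hy).1⟩

theorem iteratedDerivWithin_inverse_isTheta (hmaps : MapsTo h (Icc 0 (1 / π)) (Icc 0 1))
    (hright : RightInvOn h gfun (Icc 0 (1 / π))) (hleft : LeftInvOn h gfun (Icc 0 1)) {j : ℕ}
    (hj : j = 1 ∨ j = 2 ∨ j = 3) :
    iteratedDerivWithin j h (Icc 0 (1 / π)) =Θ[𝓟 (Ioc 0 (1 / π))]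
      fun y => y ^ ((2 : ℝ) / 3 - j) := by
  have hcont : ContinuousOn (arccos ∘ h) (Icc 0 (1 / π)) :=
    continuous_arccos.comp_continuousOn (continuousOn_of_leftInvOn_of_isCompact isCompact_Icc
      continuous_gfun.continuousOn hmaps hleft hright)
  have hsub : Ioc 0 (1 / π) ⊆ Icc 0 (1 / π) := Ioc_subset_Icc_self
  have hmaps_Ioc : MapsTo h (Ioc 0 (1 / π)) (Icc 0 1) := hmaps.mono_left hsub
  have hright_Ioc : RightInvOn h gfun (Ioc 0 (1 / π)) := hright.mono hsub
  have hmaps_neg : MapsTo h (Ioc 0 (1 / π)) (Icc (-1) 1) :=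
    hmaps_Ioc.mono_right (Icc_subset_Icc_left (by norm_num))
  have heq : EqOn h (cos ∘ arccos ∘ h) (Ioc 0 (1 / π)) := fun y hy =>
    (cos_arccos (hmaps_neg hy).1 (hmaps_neg hy).2).symm
  refine EventuallyEq.trans_isTheta (eventually_principal.2 fun y hy => ?_)
    (iteratedDerivWithin_cos_comp_isTheta (uniqueDiffOn_Ioc 0 (1 / π)) (hcont.mono hsub)
      (mapsTo_arccos_comp Ioc_subset_Ioi_self hmaps_Ioc hright_Ioc)
      (rightInvOn_arccos_comp hmaps_neg hright_Ioc) hj)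
  rw [iteratedDerivWithin_congr_set (Icc_eventuallyEq_Ioc hy.1), iteratedDerivWithin_congr heq hy]

end Inverse

/-- the derivatives of the inverse function `h = g⁻¹ : [0, 1/π] → [0, 1]`
satisfy `|h^{(j)}(y)| ≍ y^{2/3 - j}` for `y ∈ (0, 1/π]` and `j = 1, 2, 3`. -/
theorem inverse_gfun_deriv_bounds (h : ℝ → ℝ)
    (h_maps : ∀ y ∈ Set.Icc (0:ℝ) (1 / π), h y ∈ Set.Icc (0:ℝ) 1)
    (h_right_inv : ∀ y ∈ Set.Icc (0:ℝ) (1 / π), gfun (h y) = y)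
    (h_left_inv : ∀ t ∈ Set.Icc (0:ℝ) 1, h (gfun t) = t) :
    ∃ c C : ℝ, 0 < c ∧ c < C ∧ ∀ y ∈ Set.Ioc (0:ℝ) (1 / π), ∀ j : ℕ,
      (j = 1 ∨ j = 2 ∨ j = 3) →
      c * y ^ ((2 : ℝ) / 3 - (j : ℝ)) ≤
          |iteratedDerivWithin j h (Set.Icc (0:ℝ) (1 / π)) y| ∧
        |iteratedDerivWithin j h (Set.Icc (0:ℝ) (1 / π)) y| ≤
          C * y ^ ((2 : ℝ) / 3 - (j : ℝ)) := by
  obtain ⟨c, C, hc, hcC, hbounds⟩ := exists_forall_bounds_of_isTheta_principal (J := {1, 2, 3})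
    fun j hj => iteratedDerivWithin_inverse_isTheta h_maps h_right_inv h_left_inv (j := j)
      (by simpa using hj)
  refine ⟨c, C, hc, hcC, fun y hy j hj => ?_⟩
  simpa only [norm_eq_abs, abs_of_nonneg (rpow_nonneg hy.1.le _)] using
    hbounds j (by simpa using hj) y hy
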